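/- arXiv:2601.17261 — 2 statements merged into one kernel-verified Lean document; each statement's English description precedes it below -/
import Mathlib

section
/- Let L, and for each layer ℓ ∈ {1,…,L}, dimensions d_out(ℓ), d_in(ℓ), r(ℓ) be positive integers, and let A_ℓ ∈ ℝ^{d_in(ℓ)×r(ℓ)} have orthonormal columns (A_ℓᵀA_ℓ = I). Let f be a differentiable function on the product parameter space with Lip-Lipschitz gradient, let μ > 0, and let W be a point of the parameter space. Then the subspace-smoothed objective f_{μ,A} is differentiable at W and, for every layer ℓ, ∇_{W_ℓ} f_{μ,A}(W) · A_ℓA_ℓᵀ = (1/μ) · E_R[ f(W + μΔ(R)) · R_ℓA_ℓᵀ ], where ∇_{W_ℓ} denotes the block of the gradient corresponding to layer ℓ. -/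
open MeasureTheory ProbabilityTheory Matrix

attribute [local instance] Matrix.frobeniusNormedAddCommGroup Matrix.frobeniusNormedSpace
attribute [-instance] instTopologicalSpaceMatrix Matrix.instUniformSpace

noncomputable section

/-- Entrywise expectation of a matrix-valued function. -/
def matExp {Ω : Type*} [MeasurableSpace Ω] (P : Measure Ω)
    {ι κ : Type*} (F : Ω → Matrix ι κ ℝ) : Matrix ι κ ℝ :=
  Matrix.of fun i j => ∫ ω, F ω i j ∂P

variable {L : ℕ} {dout din r : Fin L → ℕ}

/-- The block of the (Frobenius) gradient of `f` corresponding to layer `ℓ`: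
its `(i,j)` entry is the partial derivative of `f` in the direction of the
standard basis matrix `E_{ij}` of layer `ℓ`. -/
def gradBlock (f : ((ℓ : Fin L) → Matrix (Fin (dout ℓ)) (Fin (din ℓ)) ℝ) → ℝ)
    (W : (ℓ : Fin L) → Matrix (Fin (dout ℓ)) (Fin (din ℓ)) ℝ) (ℓ : Fin L) :
    Matrix (Fin (dout ℓ)) (Fin (din ℓ)) ℝ :=
  Matrix.of fun i j => fderiv ℝ f W (Pi.single ℓ (Matrix.single i j 1))

/-- The product of standard Gaussian measures over all entries of all blocks
`R_ℓ ∈ ℝ^{dout(ℓ) × r(ℓ)}` (i.i.d. standard Gaussian entries). -/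
def gaussBlocks (dout r : Fin L → ℕ) :
    Measure ((ℓ : Fin L) → Fin (dout ℓ) → Fin (r ℓ) → ℝ) :=
  Measure.pi fun _ => Measure.pi fun _ => Measure.pi fun _ => gaussianReal 0 1

/-- The AGZO perturbation `Δ(R) = (R₁A₁ᵀ, …, R_L A_Lᵀ)`. -/
def perturbA (A : (ℓ : Fin L) → Matrix (Fin (din ℓ)) (Fin (r ℓ)) ℝ)
    (R : (ℓ : Fin L) → Fin (dout ℓ) → Fin (r ℓ) → ℝ) :
    (ℓ : Fin L) → Matrix (Fin (dout ℓ)) (Fin (din ℓ)) ℝ :=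
  fun ℓ => Matrix.of (R ℓ) * (A ℓ)ᵀ

/-- The subspace-smoothed objective `f_{μ,A}(W) = E_R[f(W + μΔ(R))]`. -/
def smoothedA (f : ((ℓ : Fin L) → Matrix (Fin (dout ℓ)) (Fin (din ℓ)) ℝ) → ℝ)
    (μ : ℝ) (A : (ℓ : Fin L) → Matrix (Fin (din ℓ)) (Fin (r ℓ)) ℝ)
    (W : (ℓ : Fin L) → Matrix (Fin (dout ℓ)) (Fin (din ℓ)) ℝ) : ℝ :=
  ∫ R, f (W + μ • perturbA A R) ∂(gaussBlocks dout r)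

/-!
The smoothed objective is differentiated under the integral sign: if `∇f` grows polynomially, then
`f(W + μΔ(R))` and `∇f(W + μΔ(R))` are dominated by powers of `1 + ‖R‖`, which are integrable as
Gaussian measures have all moments, so that `∇f_{μ,A}(W) = E[∇f(W + μΔ(R))]`. Gaussian integration
by parts (Stein's identity) in the entry `R_ℓ(i,k)`, whose direction is mapped by `Δ` to
`E_{ik}A_ℓᵀ`, then gives `μ ⟨∇_{W_ℓ} f_{μ,A}(W), E_{ik}A_ℓᵀ⟩ = E[f(W + μΔ(R)) R_ℓ(i,k)]`. The left
side is `μ` times the `(i,k)` entry of `∇_{W_ℓ} f_{μ,A}(W) A_ℓ`; it remains to multiply by `A_ℓᵀ` on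
the right.
-/

/-! ### Polynomial growth and smoothing -/

section Growth

lemma integrable_one_add_norm_pow {Ω : Type*} [NormedAddCommGroup Ω] [MeasurableSpace Ω]
    {P : Measure Ω} [IsFiniteMeasure P] {n : ℕ} (hP : MemLp id n P) :
    Integrable (fun x => (1 + ‖x‖) ^ n) P := by
  have hnorm : MemLp (fun x : Ω => ‖x‖) n P := hP.norm
  have hadd : MemLp (fun x : Ω => 1 + ‖x‖) n P := (memLp_const (1 : ℝ)).add hnorm
  refine hadd.integrable_norm_pow'.congr (.of_forall fun x => ?_)
  simp only [Real.norm_of_nonneg (by positivity : 0 ≤ 1 + ‖x‖)]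

variable {E F : Type*} [NormedAddCommGroup E] [NormedAddCommGroup F]

/-- Growth of order at most `(1 + ‖x‖) ^ n`, without any condition on derivatives (in contrast to
`Function.HasTemperateGrowth`). Used to dominate integrands under measures with moments. -/
def HasPolynomialGrowth (g : E → F) (n : ℕ) : Prop :=
  ∃ C, 0 ≤ C ∧ ∀ x, ‖g x‖ ≤ C * (1 + ‖x‖) ^ n

namespace HasPolynomialGrowth

lemma of_lipschitzWith {g : E → F} {K : NNReal} (hg : LipschitzWith K g) :
    HasPolynomialGrowth g 1 := by
  refine ⟨‖g 0‖ + K, by positivity, fun x => ?_⟩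
  have hdist : ‖g x - g 0‖ ≤ K * ‖x‖ := by simpa using hg.norm_sub_le x 0
  have htri : ‖g x‖ ≤ ‖g 0‖ + ‖g x - g 0‖ := norm_le_insert' _ _
  have hcross : 0 ≤ ‖g 0‖ * ‖x‖ := by positivity
  linarith [K.coe_nonneg]

lemma mul {A : Type*} [NormedRing A] {g h : E → A} {m n : ℕ} (hg : HasPolynomialGrowth g m)
    (hh : HasPolynomialGrowth h n) : HasPolynomialGrowth (fun x => g x * h x) (m + n) := by
  obtain ⟨C, hC, hg⟩ := hg
  obtain ⟨D, hD, hh⟩ := hh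
  refine ⟨C * D, by positivity, fun x => ?_⟩
  calc ‖g x * h x‖ ≤ ‖g x‖ * ‖h x‖ := norm_mul_le _ _
    _ ≤ C * (1 + ‖x‖) ^ m * (D * (1 + ‖x‖) ^ n) := by gcongr <;> simp only [hg, hh]
    _ = C * D * (1 + ‖x‖) ^ (m + n) := by ring

lemma of_fderiv [NormedSpace ℝ E] [NormedSpace ℝ F] {f : E → F} {n : ℕ}
    (hf : Differentiable ℝ f) (hf' : HasPolynomialGrowth (fderiv ℝ f) n) :
    HasPolynomialGrowth f (n + 1) := by
  obtain ⟨C, hC, hf'⟩ := hf'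
  refine ⟨‖f 0‖ + C, by positivity, fun x => ?_⟩
  have hmean : ‖f x - f 0‖ ≤ C * (1 + ‖x‖) ^ n * ‖x - 0‖ := by
    refine (convex_closedBall (0 : E) ‖x‖).norm_image_sub_le_of_norm_fderiv_le (𝕜 := ℝ)
      (fun y _ => hf y) (fun y hy => (hf' y).trans ?_) (by simp) (by simp)
    have : ‖y‖ ≤ ‖x‖ := by simpa using hy
    gcongr
  calc ‖f x‖ ≤ ‖f 0‖ + ‖f x - f 0‖ := norm_le_insert' _ _
    _ ≤ ‖f 0‖ * (1 + ‖x‖) ^ (n + 1) + C * (1 + ‖x‖) ^ n * (1 + ‖x‖) := by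
      refine add_le_add (le_mul_of_one_le_right (norm_nonneg _) ?_) (hmean.trans ?_)
      · exact one_le_pow₀ (by simp)
      · rw [sub_zero]
        gcongr
        simp
    _ = (‖f 0‖ + C) * (1 + ‖x‖) ^ (n + 1) := by ring

variable {Ω : Type*} [NormedAddCommGroup Ω]

lemma exists_norm_add_clm_le [NormedSpace ℝ E] [NormedSpace ℝ Ω] {g : E → F} {n : ℕ}
    (hg : HasPolynomialGrowth g n) (T : Ω →L[ℝ] E) {ρ : ℝ} (hρ : 0 ≤ ρ) :
    ∃ C, 0 ≤ C ∧ ∀ w, ‖w‖ ≤ ρ → ∀ x, ‖g (w + T x)‖ ≤ C * (1 + ‖x‖) ^ n := by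
  obtain ⟨C, hC, hg⟩ := hg
  refine ⟨C * (1 + ρ + ‖T‖) ^ n, by positivity, fun w hw x => ?_⟩
  have harg : 1 + ‖w + T x‖ ≤ (1 + ρ + ‖T‖) * (1 + ‖x‖) :=
    calc 1 + ‖w + T x‖ ≤ 1 + (ρ + ‖T‖ * ‖x‖) := by grw [norm_add_le, hw, T.le_opNorm]
      _ ≤ (1 + ρ + ‖T‖) * (1 + ‖x‖) := by
        have : 0 ≤ ρ * ‖x‖ := by positivity
        linarith [norm_nonneg x, norm_nonneg T]
  calc ‖g (w + T x)‖ ≤ C * (1 + ‖w + T x‖) ^ n := hg _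
    _ ≤ C * ((1 + ρ + ‖T‖) * (1 + ‖x‖)) ^ n := by gcongr
    _ = C * (1 + ρ + ‖T‖) ^ n * (1 + ‖x‖) ^ n := by rw [mul_pow, mul_assoc]

lemma comp_add_clm [NormedSpace ℝ E] [NormedSpace ℝ Ω] {g : E → F} {n : ℕ}
    (hg : HasPolynomialGrowth g n) (w : E) (T : Ω →L[ℝ] E) :
    HasPolynomialGrowth (fun x => g (w + T x)) n := by
  obtain ⟨C, hC, hle⟩ := hg.exists_norm_add_clm_le T (norm_nonneg w)
  exact ⟨C, hC, hle w le_rfl⟩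

variable [MeasurableSpace Ω] {P : Measure Ω} [IsFiniteMeasure P]

lemma integrable {g : Ω → F} {n : ℕ} (hg : HasPolynomialGrowth g n) (hP : MemLp id n P)
    (hgm : AEStronglyMeasurable g P) : Integrable g P := by
  obtain ⟨C, -, hg⟩ := hg
  exact ((integrable_one_add_norm_pow hP).const_mul C).mono' hgm (.of_forall hg)

end HasPolynomialGrowth

end Growth

section Smoothing

variable {Ω E F : Type*} [NormedAddCommGroup Ω] [NormedSpace ℝ Ω] [MeasurableSpace Ω]
  [NormedAddCommGroup E] [NormedSpace ℝ E] [NormedAddCommGroup F] [NormedSpace ℝ F]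

/-- The smoothing `w ↦ E[f(w + T R)]` of `f` along a linear image of a random vector `R` of
law `P`. -/
def smoothing (P : Measure Ω) (T : Ω →L[ℝ] E) (f : E → F) (w : E) : F :=
  ∫ R, f (w + T R) ∂P

variable [OpensMeasurableSpace Ω] {P : Measure Ω} [IsFiniteMeasure P] {n : ℕ}

lemma integrable_comp_add_clm_mul {f : E → ℝ} (hf : Continuous f)
    (hfgrowth : HasPolynomialGrowth f n) {φ : Ω → ℝ} {k : ℕ} (hφ : HasPolynomialGrowth φ k)
    (hφm : AEStronglyMeasurable φ P) (hP : MemLp id (n + k : ℕ) P) (T : Ω →L[ℝ] E) (w : E) :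
    Integrable (fun R => f (w + T R) * φ R) P :=
  ((hfgrowth.comp_add_clm w T).mul hφ).integrable hP <|
    (hf.comp (by fun_prop)).aestronglyMeasurable.mul hφm

variable [FiniteDimensional ℝ E]

lemma integrable_fderiv_add_clm [SecondCountableTopology F] [CompleteSpace F] {f : E → F}
    (hf' : HasPolynomialGrowth (fderiv ℝ f) n) (hP : MemLp id n P) (T : Ω →L[ℝ] E) (w : E) :
    Integrable (fun R => fderiv ℝ f (w + T R)) P := by
  borelize E
  exact (hf'.comp_add_clm w T).integrable hP
    ((measurable_fderiv ℝ f).comp (by fun_prop)).aestronglyMeasurable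

lemma hasFDerivAt_smoothing [SecondCountableTopology F] [CompleteSpace F] {f : E → F}
    (hf : Differentiable ℝ f) (hf' : HasPolynomialGrowth (fderiv ℝ f) n)
    (hP : MemLp id (n + 1 : ℕ) P) (T : Ω →L[ℝ] E) (w : E) :
    HasFDerivAt (smoothing P T f) (smoothing P T (fderiv ℝ f) w) w := by
  have hPn : MemLp id n P := hP.mono_exponent (by simp)
  have hfm (v : E) : AEStronglyMeasurable (fun R => f (v + T R)) P :=
    (hf.continuous.comp (by fun_prop)).aestronglyMeasurable
  obtain ⟨C, -, hC⟩ := hf'.exists_norm_add_clm_le T (by positivity : 0 ≤ ‖w‖ + 1)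
  refine hasFDerivAt_integral_of_dominated_of_fderiv_le (𝕜 := ℝ)
    (F' := fun v R => fderiv ℝ f (v + T R)) (Metric.ball_mem_nhds w one_pos) (.of_forall hfm)
    (((HasPolynomialGrowth.of_fderiv hf hf').comp_add_clm w T).integrable hP (hfm w))
    (integrable_fderiv_add_clm hf' hPn T w).aestronglyMeasurable
    (.of_forall fun R v hv => hC v (norm_lt_of_mem_ball hv).le R)
    ((integrable_one_add_norm_pow hPn).const_mul C)
    (.of_forall fun R v _ => (hasFDerivAt_comp_add_right (T R)).2 (hf _).hasFDerivAt)

end Smoothing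

/-! ### Stein's identity -/

/-- Integration by parts for `ν` in the direction `e`: `∫ g φ dν = ∫ ∂ₑg dν`. For `ν` of density `p`
one has `φ = -∂ₑ(log p)`. -/
def SteinIdentity {X : Type*} [MeasurableSpace X] [AddCommGroup X] [Module ℝ X]
    (ν : Measure X) (e : X) (φ : X → ℝ) : Prop :=
  ∀ g g' : X → ℝ, (∀ x, HasLineDerivAt ℝ g (g' x) x e) →
    Integrable g ν → Integrable g' ν → Integrable (fun x => g x * φ x) ν →
    ∫ x, g x * φ x ∂ν = ∫ x, g' x ∂ν

section GaussianReal

variable {m : ℝ} {v : NNReal}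

lemma hasDerivAt_gaussianPDFReal (m : ℝ) (v : NNReal) (x : ℝ) :
    HasDerivAt (gaussianPDFReal m v) (-((x - m) / v) * gaussianPDFReal m v x) x := by
  have hexponent : HasDerivAt (fun y : ℝ => -(y - m) ^ 2 / (2 * v)) (-((x - m) / v)) x := by
    refine ((((hasDerivAt_id x).sub_const m).pow 2).neg.div_const (2 * (v : ℝ))).congr_deriv ?_
    simp only [id, Nat.cast_ofNat, Nat.add_one_sub_one, pow_one, mul_one, ← mul_neg]
    rw [mul_div_mul_left _ _ two_ne_zero, neg_div]
  refine (hexponent.exp.const_mul (√(2 * Real.pi * v))⁻¹).congr_deriv ?_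
  rw [gaussianPDFReal]
  ring

lemma integrable_gaussianReal_iff (hv : v ≠ 0) {g : ℝ → ℝ} :
    Integrable g (gaussianReal m v) ↔ Integrable (fun x => g x * gaussianPDFReal m v x) := by
  rw [gaussianReal_of_var_ne_zero m hv,
    integrable_withDensity_iff (measurable_gaussianPDF m v) (by simp [gaussianPDF])]
  simp only [toReal_gaussianPDF]

lemma steinIdentity_gaussianReal (hv : v ≠ 0) :
    SteinIdentity (gaussianReal m v) (v : ℝ) (fun x => x - m) := by
  intro g g' hg hgi hgi' hgφ
  rw [integrable_gaussianReal_iff hv] at hgi hgi' hgφ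
  have hv' : (v : ℝ) ≠ 0 := by exact_mod_cast hv
  have hderiv (x : ℝ) : HasDerivAt g ((v : ℝ)⁻¹ * g' x) x := by
    have hline : HasDerivAt (fun t : ℝ => g (x + t * v)) (g' x) ((v : ℝ)⁻¹ * (x - x)) := by
      simpa [HasLineDerivAt] using hg x
    have hreparam : HasDerivAt (fun y : ℝ => (v : ℝ)⁻¹ * (y - x)) (v : ℝ)⁻¹ x := by
      simpa using ((hasDerivAt_id x).sub_const x).const_mul (v : ℝ)⁻¹
    refine ((hline.comp x hreparam).congr_deriv (mul_comm _ _)).congr_of_eventuallyEq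
      (.of_forall fun y => ?_)
    simp only [Function.comp_apply]
    congr 1
    field_simp
    ring
  have hparts := integral_mul_deriv_eq_deriv_mul_of_integrable (fun x _ => hderiv x)
    (fun x _ => hasDerivAt_gaussianPDFReal m v x)
    ((hgφ.const_mul (-(v : ℝ)⁻¹)).congr (.of_forall fun x => by simp only [Pi.mul_apply]; ring))
    ((hgi'.const_mul (v : ℝ)⁻¹).congr (.of_forall fun x => by simp only [Pi.mul_apply]; ring)) hgi
  simp only [integral_gaussianReal_eq_integral_smul hv, smul_eq_mul]
  calc ∫ x, gaussianPDFReal m v x * (g x * (x - m))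
      = -v * ∫ x, g x * (-((x - m) / v) * gaussianPDFReal m v x) := by
        rw [← integral_const_mul]
        congr with x
        field_simp
    _ = ∫ x, gaussianPDFReal m v x * g' x := by
        rw [hparts, neg_mul_neg, ← integral_const_mul]
        congr with x
        field_simp

end GaussianReal

lemma hasLineDerivAt_update {ι F : Type*} [DecidableEq ι] {X : ι → Type*}
    [∀ i, AddCommGroup (X i)] [∀ i, Module ℝ (X i)] [NormedAddCommGroup F] [NormedSpace ℝ F]
    {g : (∀ j, X j) → F} {g' : F} {x : ∀ j, X j} {i : ι} {y e : X i}
    (hg : HasLineDerivAt ℝ g g' (Function.update x i y) (Pi.single i e)) :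
    HasLineDerivAt ℝ (fun z => g (Function.update x i z)) g' y e := by
  unfold HasLineDerivAt at hg ⊢
  have hupdate (t : ℝ) : Function.update x i y + t • Pi.single i e
      = Function.update x i (y + t • e) := by
    ext j
    obtain rfl | hne := eq_or_ne j i
    · simp
    · simp [hne]
  simpa only [hupdate] using hg

section Pi

variable {ι : Type*} [Fintype ι] {X : ι → Type*} [∀ i, MeasurableSpace (X i)]
  (ν : ∀ i, Measure (X i))

lemma memLp_id_pi [∀ i, NormedAddCommGroup (X i)] [∀ i, IsProbabilityMeasure (ν i)] {p : ENNReal}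
    (h : ∀ i, MemLp id p (ν i)) : MemLp id p (Measure.pi ν) :=
  MemLp.of_eval fun i => (h i).comp_measurePreserving (measurePreserving_eval ν i)

variable [DecidableEq ι] [∀ i, SigmaFinite (ν i)] (i : ι) [IsProbabilityMeasure (ν i)]

lemma measurePreserving_update :
    MeasurePreserving (fun p : (∀ j, X j) × X i => Function.update p.1 i p.2)
      ((Measure.pi ν).prod (ν i)) (Measure.pi ν) := by
  refine ⟨measurable_update', (Measure.pi_eq fun s hs => ?_).symm⟩
  have hpreimage : (fun p : (∀ j, X j) × X i => Function.update p.1 i p.2) ⁻¹' Set.univ.pi s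
      = Set.univ.pi (Function.update s i Set.univ) ×ˢ s i := by
    ext ⟨x, y⟩
    simp only [Set.mem_preimage, Set.mem_univ_pi, Set.mem_prod,
      Function.forall_update_iff x fun j z => z ∈ s j,
      Function.forall_update_iff s fun j t => x j ∈ t, Set.mem_univ, true_and, and_comm]
  rw [Measure.map_apply measurable_update' (.univ_pi hs), hpreimage, Measure.prod_prod,
    Measure.pi_pi, ← Finset.mul_prod_erase _ _ (Finset.mem_univ i),
    ← Finset.mul_prod_erase _ (fun j => ν j (s j)) (Finset.mem_univ i), Function.update_self,
    measure_univ, one_mul, mul_comm]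
  congr 1
  refine Finset.prod_congr rfl fun j hj => ?_
  rw [Function.update_of_ne (Finset.ne_of_mem_erase hj)]

lemma integral_pi_eq_integral_integral_update {F : Type*} [NormedAddCommGroup F] [NormedSpace ℝ F]
    {G : (∀ j, X j) → F} (hG : Integrable G (Measure.pi ν)) :
    ∫ x, G x ∂Measure.pi ν
      = ∫ x, ∫ y, G (Function.update x i y) ∂ν i ∂Measure.pi ν := by
  have hmp := measurePreserving_update ν i
  calc ∫ x, G x ∂Measure.pi ν = ∫ p, G (Function.update p.1 i p.2) ∂(Measure.pi ν).prod (ν i) := by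
        conv_lhs => rw [← hmp.map_eq]
        exact integral_map hmp.measurable.aemeasurable
          (hmp.map_eq.symm ▸ hG.aestronglyMeasurable)
    _ = ∫ x, ∫ y, G (Function.update x i y) ∂ν i ∂Measure.pi ν :=
        integral_prod _ (hmp.integrable_comp_of_integrable hG)

lemma SteinIdentity.pi [∀ i, AddCommGroup (X i)] [∀ i, Module ℝ (X i)] {e : X i} {φ : X i → ℝ}
    (h : SteinIdentity (ν i) e φ) :
    SteinIdentity (Measure.pi ν) (Pi.single i e) (fun x => φ (x i)) := by
  intro g g' hg hgi hgi' hgφ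
  have hslice {G : (∀ j, X j) → ℝ} (hG : Integrable G (Measure.pi ν)) :
      ∀ᵐ x ∂Measure.pi ν, Integrable (fun y => G (Function.update x i y)) (ν i) :=
    ((measurePreserving_update ν i).integrable_comp_of_integrable hG).prod_right_ae
  rw [integral_pi_eq_integral_integral_update ν i hgφ,
    integral_pi_eq_integral_integral_update ν i hgi']
  refine integral_congr_ae ?_
  filter_upwards [hslice hgi, hslice hgi', hslice hgφ] with x hxg hxg' hxφ
  simp only [Function.update_self] at hxφ ⊢
  exact h _ _ (fun y => hasLineDerivAt_update (hg _)) hxg hxg' hxφ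

end Pi

lemma SteinIdentity.fderiv_smoothing_apply {Ω E : Type*} [NormedAddCommGroup Ω] [NormedSpace ℝ Ω]
    [MeasurableSpace Ω] [OpensMeasurableSpace Ω] [NormedAddCommGroup E] [NormedSpace ℝ E]
    [FiniteDimensional ℝ E] {P : Measure Ω} [IsFiniteMeasure P] {e : Ω} {φ : Ω → ℝ} {k n : ℕ}
    (hS : SteinIdentity P e φ) (hφ : HasPolynomialGrowth φ k) (hφm : AEStronglyMeasurable φ P)
    {f : E → ℝ} (hf : Differentiable ℝ f) (hf' : HasPolynomialGrowth (fderiv ℝ f) n)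
    (hP : MemLp id (n + 1 + k : ℕ) P) (T : Ω →L[ℝ] E) (w : E) :
    fderiv ℝ (smoothing P T f) w (T e) = ∫ R, f (w + T R) * φ R ∂P := by
  have hPn : MemLp id (n + 1 : ℕ) P := hP.mono_exponent (by simp)
  have hfgrowth : HasPolynomialGrowth f (n + 1) := .of_fderiv hf hf'
  have hint' : Integrable (fun R => fderiv ℝ f (w + T R)) P :=
    integrable_fderiv_add_clm hf' (hPn.mono_exponent (by simp)) T w
  have hline (R : Ω) :
      HasLineDerivAt ℝ (fun S => f (w + T S)) (fderiv ℝ f (w + T R) (T e)) R e :=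
    ((hf _).hasFDerivAt.comp R (T.hasFDerivAt.const_add w)).hasLineDerivAt e
  rw [(hasFDerivAt_smoothing hf hf' hPn T w).fderiv, smoothing,
    ContinuousLinearMap.integral_apply hint']
  exact (hS _ _ hline
    ((hfgrowth.comp_add_clm w T).integrable hPn
      (hf.continuous.comp (by fun_prop)).aestronglyMeasurable)
    (hint'.apply_continuousLinearMap _)
    (integrable_comp_add_clm_mul hf.continuous hfgrowth hφ hφm hP T w)).symm

/-! ### Gaussian blocks and the subspace-smoothed objective -/

instance instIsProbabilityMeasureGaussBlocks (dout r : Fin L → ℕ) :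
    IsProbabilityMeasure (gaussBlocks dout r) := by
  unfold gaussBlocks
  infer_instance

lemma memLp_id_gaussBlocks (dout r : Fin L → ℕ) {p : ENNReal} (hp : p ≠ ⊤) :
    MemLp id p (gaussBlocks dout r) :=
  memLp_id_pi _ fun _ => memLp_id_pi _ fun _ => memLp_id_pi _ fun _ =>
    memLp_id_gaussianReal' p hp

lemma steinIdentity_gaussBlocks (ℓ : Fin L) (i : Fin (dout ℓ)) (k : Fin (r ℓ)) :
    SteinIdentity (gaussBlocks dout r) (Pi.single ℓ (Pi.single i (Pi.single k 1)))
      (fun R => R ℓ i k) := by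
  have hreal : SteinIdentity (gaussianReal 0 1) (1 : ℝ) (fun x => x) := by
    simpa using steinIdentity_gaussianReal (m := 0) one_ne_zero
  exact .pi (fun ℓ => Measure.pi fun _ : Fin (dout ℓ) => Measure.pi fun _ : Fin (r ℓ) =>
      gaussianReal 0 1) ℓ
    (.pi (fun _ => Measure.pi fun _ => gaussianReal 0 1) i
      (.pi (fun _ => gaussianReal 0 1) k hreal))

lemma hasPolynomialGrowth_apply (ℓ : Fin L) (i : Fin (dout ℓ)) (k : Fin (r ℓ)) :
    HasPolynomialGrowth (fun R : (ℓ : Fin L) → Fin (dout ℓ) → Fin (r ℓ) → ℝ => R ℓ i k) 1 :=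
  .of_lipschitzWith <|
    (LipschitzWith.eval k).comp ((LipschitzWith.eval i).comp (LipschitzWith.eval ℓ))

/-- `perturbA A` as a continuous linear map, so that `smoothedA` is an instance of `smoothing`. -/
def perturbCLM (A : (ℓ : Fin L) → Matrix (Fin (din ℓ)) (Fin (r ℓ)) ℝ) :
    ((ℓ : Fin L) → Fin (dout ℓ) → Fin (r ℓ) → ℝ) →L[ℝ]
      ((ℓ : Fin L) → Matrix (Fin (dout ℓ)) (Fin (din ℓ)) ℝ) :=
  LinearMap.toContinuousLinearMap <| LinearMap.pi fun ℓ =>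
    mulRightLinearMap (Fin (dout ℓ)) ℝ (A ℓ)ᵀ ∘ₗ (ofLinearEquiv ℝ).toLinearMap ∘ₗ
      LinearMap.proj ℓ

lemma smoothedA_eq_smoothing (f : ((ℓ : Fin L) → Matrix (Fin (dout ℓ)) (Fin (din ℓ)) ℝ) → ℝ)
    (μ : ℝ) (A : (ℓ : Fin L) → Matrix (Fin (din ℓ)) (Fin (r ℓ)) ℝ) :
    smoothedA f μ A = smoothing (gaussBlocks dout r) (μ • perturbCLM A) f :=
  rfl

lemma perturbCLM_single (A : (ℓ : Fin L) → Matrix (Fin (din ℓ)) (Fin (r ℓ)) ℝ) (ℓ : Fin L)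
    (R : Fin (dout ℓ) → Fin (r ℓ) → ℝ) :
    perturbCLM A (Pi.single ℓ R) = Pi.single ℓ (Matrix.of R * (A ℓ)ᵀ) := by
  ext ℓ' : 1
  change Matrix.of ((Pi.single ℓ R : (ℓ : Fin L) → Fin (dout ℓ) → Fin (r ℓ) → ℝ) ℓ') *
    (A ℓ')ᵀ = _
  obtain rfl | hne := eq_or_ne ℓ' ℓ
  · simp
  · simp [hne]

lemma fderiv_single_eq_trace (g : ((ℓ : Fin L) → Matrix (Fin (dout ℓ)) (Fin (din ℓ)) ℝ) → ℝ)
    (W : (ℓ : Fin L) → Matrix (Fin (dout ℓ)) (Fin (din ℓ)) ℝ) (ℓ : Fin L)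
    (X : Matrix (Fin (dout ℓ)) (Fin (din ℓ)) ℝ) :
    fderiv ℝ g W (Pi.single ℓ X) = ((gradBlock g W ℓ)ᵀ * X).trace := by
  have hlinear : (fderiv ℝ g W).toLinearMap ∘ₗ LinearMap.single ℝ _ ℓ
      = traceLinearMap (Fin (din ℓ)) ℝ ℝ ∘ₗ
        mulLeftLinearMap (Fin (din ℓ)) ℝ (gradBlock g W ℓ)ᵀ := by
    refine Matrix.ext_linearMap _ fun i j => LinearMap.ext_ring ?_
    simp [gradBlock, trace_mul_single]
  exact LinearMap.congr_fun hlinear X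

lemma matExp_mul {Ω ι κ τ : Type*} [MeasurableSpace Ω] {P : Measure Ω} [Fintype κ]
    {F : Ω → Matrix ι κ ℝ} (hF : ∀ i k, Integrable (fun ω => F ω i k) P) (B : Matrix κ τ ℝ) :
    matExp P (fun ω => F ω * B) = matExp P F * B := by
  ext i j
  simp only [matExp, of_apply, mul_apply]
  rw [integral_finsetSum _ fun k _ => (hF i k).mul_const _]
  simp only [integral_mul_const]

section Objective

variable {f : ((ℓ : Fin L) → Matrix (Fin (dout ℓ)) (Fin (din ℓ)) ℝ) → ℝ} {n : ℕ}

lemma integrable_smul_of_apply (hf : Differentiable ℝ f)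
    (hf' : HasPolynomialGrowth (fderiv ℝ f) n) (μ : ℝ)
    (A : (ℓ : Fin L) → Matrix (Fin (din ℓ)) (Fin (r ℓ)) ℝ)
    (W : (ℓ : Fin L) → Matrix (Fin (dout ℓ)) (Fin (din ℓ)) ℝ) (ℓ : Fin L) (i : Fin (dout ℓ))
    (k : Fin (r ℓ)) :
    Integrable (fun R => (f (W + μ • perturbA A R) • Matrix.of (R ℓ)) i k)
      (gaussBlocks dout r) :=
  integrable_comp_add_clm_mul hf.continuous (.of_fderiv hf hf') (hasPolynomialGrowth_apply ℓ i k)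
    (Continuous.aestronglyMeasurable (by fun_prop)) (memLp_id_gaussBlocks dout r (by simp))
    (μ • perturbCLM A) W

lemma smul_gradBlock_smoothedA_mul (hf : Differentiable ℝ f)
    (hf' : HasPolynomialGrowth (fderiv ℝ f) n) (μ : ℝ)
    (A : (ℓ : Fin L) → Matrix (Fin (din ℓ)) (Fin (r ℓ)) ℝ)
    (W : (ℓ : Fin L) → Matrix (Fin (dout ℓ)) (Fin (din ℓ)) ℝ) (ℓ : Fin L) :
    μ • (gradBlock (smoothedA f μ A) W ℓ * A ℓ) =
      matExp (gaussBlocks dout r) (fun R => f (W + μ • perturbA A R) • Matrix.of (R ℓ)) := by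
  ext i k
  have hstein := (steinIdentity_gaussBlocks ℓ i k).fderiv_smoothing_apply
    (hasPolynomialGrowth_apply ℓ i k) (Continuous.aestronglyMeasurable (by fun_prop)) hf hf'
    (memLp_id_gaussBlocks dout r (by simp)) (μ • perturbCLM A) W
  refine Eq.trans ?_ hstein
  rw [← smoothedA_eq_smoothing, _root_.smul_apply, map_smul, perturbCLM_single,
    fderiv_single_eq_trace, ← single_eq_of_single_single, trace_mul_comm, Matrix.mul_assoc,
    trace_single_mul]
  simp [← transpose_mul]

end Objective

theorem agzo_subspace_smoothing_one_sided_general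
    {f : ((ℓ : Fin L) → Matrix (Fin (dout ℓ)) (Fin (din ℓ)) ℝ) → ℝ} (hf : Differentiable ℝ f)
    {n : ℕ} (hf' : HasPolynomialGrowth (fderiv ℝ f) n) {μ : ℝ} (hμ : μ ≠ 0)
    (A : (ℓ : Fin L) → Matrix (Fin (din ℓ)) (Fin (r ℓ)) ℝ)
    (W : (ℓ : Fin L) → Matrix (Fin (dout ℓ)) (Fin (din ℓ)) ℝ) :
    DifferentiableAt ℝ (smoothedA f μ A) W ∧
    ∀ ℓ, gradBlock (smoothedA f μ A) W ℓ * (A ℓ * (A ℓ)ᵀ) =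
      μ⁻¹ • matExp (gaussBlocks dout r)
        (fun R => f (W + μ • perturbA A R) • (Matrix.of (R ℓ) * (A ℓ)ᵀ)) := by
  refine ⟨(hasFDerivAt_smoothing hf hf' (memLp_id_gaussBlocks dout r (by simp))
    (μ • perturbCLM A) W).differentiableAt, fun ℓ => ?_⟩
  simp only [← smul_mul]
  rw [matExp_mul (integrable_smul_of_apply hf hf' μ A W ℓ),
    ← smul_gradBlock_smoothedA_mul hf hf', Matrix.smul_mul, inv_smul_smul₀ hμ, Matrix.mul_assoc]

/-- the subspace-smoothed objective is differentiable at `W` and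
`∇_{W_ℓ} f_{μ,A}(W) · A_ℓA_ℓᵀ = (1/μ)·E_R[f(W + μΔ(R))·R_ℓA_ℓᵀ]`. -/
theorem agzo_subspace_smoothing_one_sided
    (L : ℕ) (hL : 0 < L) (dout din r : Fin L → ℕ)
    (hdout : ∀ ℓ, 0 < dout ℓ) (hdin : ∀ ℓ, 0 < din ℓ) (hr : ∀ ℓ, 0 < r ℓ)
    (A : (ℓ : Fin L) → Matrix (Fin (din ℓ)) (Fin (r ℓ)) ℝ)
    (hA : ∀ ℓ, (A ℓ)ᵀ * A ℓ = 1)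
    (f : ((ℓ : Fin L) → Matrix (Fin (dout ℓ)) (Fin (din ℓ)) ℝ) → ℝ)
    (hf : Differentiable ℝ f) (Lip : ℝ)
    (hLip : ∀ W W', ‖fderiv ℝ f W - fderiv ℝ f W'‖ ≤ Lip * ‖W - W'‖)
    (μ : ℝ) (hμ : 0 < μ)
    (W : (ℓ : Fin L) → Matrix (Fin (dout ℓ)) (Fin (din ℓ)) ℝ) :
    DifferentiableAt ℝ (smoothedA f μ A) W ∧
    ∀ ℓ, gradBlock (smoothedA f μ A) W ℓ * (A ℓ * (A ℓ)ᵀ) =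
      μ⁻¹ • matExp (gaussBlocks dout r)
        (fun R => f (W + μ • perturbA A R) • (Matrix.of (R ℓ) * (A ℓ)ᵀ)) := by
  have hlip : LipschitzWith Lip.toNNReal (fderiv ℝ f) := LipschitzWith.of_dist_le' fun W W' => by
    simpa only [dist_eq_norm] using hLip W W'
  exact agzo_subspace_smoothing_one_sided_general hf (.of_lipschitzWith hlip) hμ.ne' A W

end
end

section
/- Let m, n, r be positive integers, let G ∈ ℝ^{m×n} be nonzero, let A ∈ ℝ^{n×r} have orthonormal columns (AᵀA = I_r), and let R ∈ ℝ^{m×r} have i.i.d. standard Gaussian entries. Then E_R[ |⟨R, GA⟩_F| / (‖R‖_F · ‖G‖_F) ] = β_{mr} · ‖GA‖_F / ‖G‖_F, where the integrand is defined to be 0 when R = 0. Consequently, the expected cosine similarity between the noiseless AGZO estimator Ĝ := ⟨G, RAᵀ⟩_F · RAᵀ and G equals β_{mr} · ‖GA‖_F / ‖G‖_F. -/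
open MeasureTheory ProbabilityTheory Matrix Real

attribute [local instance] Matrix.frobeniusNormedAddCommGroup Matrix.frobeniusNormedSpace

noncomputable section

/-- Frobenius inner product `⟨X,Y⟩_F = tr(XᵀY)`. -/
def frobInner {ι κ : Type*} [Fintype ι] [Fintype κ]
    (X Y : Matrix ι κ ℝ) : ℝ := (Xᵀ * Y).trace

/-- The product of standard Gaussian measures over all entries of an `m × r` matrix
(i.i.d. standard Gaussian entries). -/
def gaussMat (m r : ℕ) : Measure (Fin m → Fin r → ℝ) :=
  Measure.pi fun _ => Measure.pi fun _ => gaussianReal 0 1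

/-- `β_D = Γ(D/2)/(√π·Γ((D+1)/2))`. -/
def beta (D : ℕ) : ℝ :=
  Real.Gamma (D / 2) / (Real.sqrt π * Real.Gamma ((D + 1) / 2))

/-!
Let `x` be a standard Gaussian vector in a Euclidean space `E` of dimension `d`. By rotation
invariance, `C v = 𝔼[|⟪v, x⟫| / ‖x‖]` is a multiple of `‖v‖`. The multiple is found by averaging
over an independent standard Gaussian `v`: conditionally on `x`, the mean of `|⟪v, x⟫|` is
`√(2 / π) ‖x‖`, so `𝔼[C v] = √(2 / π)` and `C v = ‖v‖ √(2 / π) / 𝔼‖x‖`. Integrating the Gaussian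
density radially gives `𝔼‖x‖ = √2 Γ((d + 1) / 2) / Γ(d / 2)`, whence `C v = β_d ‖v‖`.

For the estimator, `⟨G, RAᵀ⟩ = ⟨GA, R⟩` by adjointness and `‖RAᵀ‖ = ‖R‖` since `AᵀA = 1`, so its
cosine with `G` equals `|⟨R, GA⟩| / (‖R‖ ‖G‖)` for every `R`.
-/

open Module Set
open scoped RealInnerProductSpace

lemma integral_norm_rpow_mul_exp_neg_mul_sq_norm {E : Type*} [NormedAddCommGroup E]
    [NormedSpace ℝ E] [FiniteDimensional ℝ E] [Nontrivial E] [MeasurableSpace E] [BorelSpace E]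
    (μ : Measure E) [μ.IsAddHaarMeasure] {p b : ℝ} (hp : -finrank ℝ E < p) (hb : 0 < b) :
    ∫ x, ‖x‖ ^ p * rexp (-b * ‖x‖ ^ 2) ∂μ =
      finrank ℝ E * μ.real (Metric.ball 0 1) *
        (b ^ (-((finrank ℝ E + p) / 2)) * (1 / 2) * Gamma ((finrank ℝ E + p) / 2)) := by
  have h_radial : ∫ y in Ioi (0 : ℝ), y ^ (finrank ℝ E - 1) • (y ^ p * rexp (-b * y ^ 2)) =
      ∫ y in Ioi (0 : ℝ), y ^ (finrank ℝ E - 1 + p) * rexp (-b * y ^ (2 : ℝ)) := by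
    refine setIntegral_congr_fun measurableSet_Ioi fun y hy ↦ ?_
    have h_pow : y ^ (finrank ℝ E - 1 + p) = y ^ (finrank ℝ E - 1) * y ^ p := by
      rw [rpow_add hy, ← Nat.cast_pred finrank_pos, rpow_natCast]
    simp only [smul_eq_mul, rpow_ofNat, h_pow, mul_assoc]
  rw [integral_fun_norm_addHaar μ fun y ↦ y ^ p * rexp (-b * y ^ 2), h_radial,
    integral_rpow_mul_exp_neg_mul_rpow two_pos (by linarith) hb, nsmul_eq_mul, smul_eq_mul,
    ← mul_assoc]
  ring_nf

section Gaussian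

variable {E : Type*} [NormedAddCommGroup E] [InnerProductSpace ℝ E] [FiniteDimensional ℝ E]
  [MeasurableSpace E] [BorelSpace E]

lemma stdGaussian_eq_tilted :
    stdGaussian E = (volume : Measure E).tilted fun x ↦ -(1 / 2) * ‖x‖ ^ 2 := by
  apply Measure.ext_of_charFun
  ext t
  have h_integral : ∫ x : E, (rexp (-(1 / 2) * ‖x‖ ^ 2) : ℂ) * Complex.exp (⟪x, t⟫ * Complex.I)
      = (∫ x : E, rexp (-(1 / 2) * ‖x‖ ^ 2) : ℝ) * Complex.exp (-‖t‖ ^ 2 / 2) := by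
    have h_fourier := GaussianFourier.integral_cexp_neg_mul_sq_norm_add (V := E) (b := 1 / 2)
      (by norm_num) Complex.I t
    have h_total := GaussianFourier.integral_cexp_neg_mul_sq_norm (V := E) (b := 1 / 2)
      (by norm_num)
    rw [← integral_complex_ofReal]
    push_cast
    rw [h_total]
    simp_rw [← Complex.exp_add, real_inner_comm t, mul_comm _ Complex.I, h_fourier,
      Complex.I_sq]
    ring_nf
  have h_pos : (∫ x : E, rexp (-(1 / 2) * ‖x‖ ^ 2)) ≠ 0 := by
    rw [GaussianFourier.integral_rexp_neg_mul_sq_norm (by norm_num)]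
    positivity
  rw [charFun_stdGaussian, charFun_apply, integral_tilted]
  simp_rw [Complex.real_smul, Complex.ofReal_div, div_mul_eq_mul_div]
  rw [integral_div, h_integral, mul_div_cancel_left₀ _ (by exact_mod_cast h_pos)]

instance nullSingletonClass_stdGaussian [Nontrivial E] : NullSingletonClass (stdGaussian E) where
  measure_singleton x := by
    rw [stdGaussian_eq_tilted]
    exact tilted_absolutelyContinuous _ _ (measure_singleton x)

lemma integral_norm_rpow_stdGaussian [Nontrivial E] {p : ℝ} (hp : -finrank ℝ E < p) :
    ∫ x, ‖x‖ ^ p ∂stdGaussian E =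
      2 ^ (p / 2) * Gamma ((finrank ℝ E + p) / 2) / Gamma (finrank ℝ E / 2) := by
  have h_dim : (0 : ℝ) < finrank ℝ E := by exact_mod_cast finrank_pos
  have h_ball : 0 < (volume : Measure E).real (Metric.ball 0 1) :=
    ENNReal.toReal_pos (Metric.measure_ball_pos _ _ one_pos).ne' measure_ball_lt_top.ne
  have h_total := integral_norm_rpow_mul_exp_neg_mul_sq_norm (volume : Measure E) (p := 0)
    (neg_lt_zero.2 h_dim) one_half_pos
  simp only [rpow_zero, one_mul, add_zero] at h_total
  rw [stdGaussian_eq_tilted, integral_tilted]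
  simp_rw [smul_eq_mul, div_mul_eq_mul_div, mul_comm (rexp _)]
  rw [integral_div, h_total,
    integral_norm_rpow_mul_exp_neg_mul_sq_norm volume hp one_half_pos]
  have h_two (s : ℝ) : (1 / 2 : ℝ) ^ (-s) = 2 ^ s := by
    rw [one_div, inv_rpow zero_le_two, rpow_neg zero_le_two, inv_inv]
  have h_Gamma : Gamma (finrank ℝ E / 2 : ℝ) ≠ 0 := (Gamma_pos_of_pos (by positivity)).ne'
  rw [h_two, h_two, add_div, rpow_add two_pos]
  field_simp

lemma integral_norm_stdGaussian [Nontrivial E] :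
    ∫ x, ‖x‖ ∂stdGaussian E = √2 * Gamma ((finrank ℝ E + 1) / 2) / Gamma (finrank ℝ E / 2) := by
  simpa [sqrt_eq_rpow] using integral_norm_rpow_stdGaussian (E := E) (p := 1)
    (by linarith [(finrank ℝ E).cast_nonneg (α := ℝ)])

lemma stdGaussian_map_inner (v : E) :
    (stdGaussian E).map (⟪v, ·⟫) = gaussianReal 0 (‖v‖₊ ^ 2) := by
  have h_gaussian := IsGaussian.map_eq_gaussianReal (μ := stdGaussian E) (innerSL ℝ v)
  rwa [integral_strongDual_stdGaussian, variance_dual_stdGaussian, innerSL_apply_norm,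
    ← coe_nnnorm, ← NNReal.coe_pow, toNNReal_coe] at h_gaussian

lemma integral_abs_inner_stdGaussian (v : E) :
    ∫ x, |⟪v, x⟫| ∂stdGaussian E = ‖v‖ * √(2 / π) := by
  calc ∫ x, |⟪v, x⟫| ∂stdGaussian E
      = ∫ y, |y| ∂(stdGaussian E).map (⟪v, ·⟫) :=
        (integral_map (by fun_prop) (by fun_prop)).symm
    _ = ∫ y, |y| ∂(stdGaussian ℝ).map (⟪‖v‖, ·⟫) := by
        rw [stdGaussian_map_inner, stdGaussian_map_inner, nnnorm_norm]
    _ = ∫ y, |⟪‖v‖, y⟫| ∂stdGaussian ℝ := integral_map (by fun_prop) (by fun_prop)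
    _ = ‖v‖ * ∫ y, ‖y‖ ∂stdGaussian ℝ := by
        simp only [inner_apply, abs_mul, abs_norm, integral_const_mul, norm_eq_abs]
    _ = ‖v‖ * √(2 / π) := by
        rw [integral_norm_stdGaussian, finrank_self, Nat.cast_one, Gamma_one_half_eq,
          add_self_div_two, Gamma_one, mul_one, sqrt_div zero_le_two]

lemma integral_inner_norm_stdGaussian_eq_of_norm_eq {F : Type*} [NormedAddCommGroup F]
    [NormedSpace ℝ F] (f : ℝ → ℝ → F) {v w : E} (h : ‖v‖ = ‖w‖) :
    ∫ x, f ⟪v, x⟫ ‖x‖ ∂stdGaussian E = ∫ x, f ⟪w, x⟫ ‖x‖ ∂stdGaussian E := by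
  let ρ := (ℝ ∙ (v - w))ᗮ.reflection
  have h_map : ρ v = w := Submodule.reflection_sub h
  calc ∫ x, f ⟪v, x⟫ ‖x‖ ∂stdGaussian E
      = ∫ x, f ⟪w, ρ x⟫ ‖ρ x‖ ∂stdGaussian E := by
        simp_rw [← h_map, LinearIsometryEquiv.inner_map_map, LinearIsometryEquiv.norm_map]
    _ = ∫ x, f ⟪w, x⟫ ‖x‖ ∂(stdGaussian E).map ρ :=
        (integral_map_equiv ρ.toHomeomorph.toMeasurableEquiv fun x ↦ f ⟪w, x⟫ ‖x‖).symm
    _ = ∫ x, f ⟪w, x⟫ ‖x‖ ∂stdGaussian E := by rw [stdGaussian_map]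

lemma norm_mul_integral_abs_inner_div_norm_stdGaussian_comm (v w : E) :
    ‖w‖ * ∫ x, |⟪v, x⟫| / ‖x‖ ∂stdGaussian E = ‖v‖ * ∫ x, |⟪w, x⟫| / ‖x‖ ∂stdGaussian E := by
  have h_norm : ‖‖w‖ • v‖ = ‖‖v‖ • w‖ := by simp only [norm_smul, norm_norm, mul_comm]
  simpa [real_inner_smul_left, abs_mul, mul_div_assoc, integral_const_mul] using
    integral_inner_norm_stdGaussian_eq_of_norm_eq (fun s t ↦ |s| / t) h_norm

lemma integrable_abs_inner_div_norm_stdGaussian_prod :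
    Integrable (fun z : E × E ↦ |⟪z.1, z.2⟫| / ‖z.2‖) ((stdGaussian E).prod (stdGaussian E)) := by
  have h_norm : Integrable (fun x : E ↦ ‖x‖) (stdGaussian E) := IsGaussian.integrable_id.norm
  have h_meas : Measurable fun z : E × E ↦ |⟪z.1, z.2⟫| / ‖z.2‖ := by fun_prop
  refine (h_norm.comp_fst _).mono' h_meas.aestronglyMeasurable (.of_forall fun z ↦ ?_)
  rw [norm_div, norm_norm, norm_eq_abs, abs_abs]
  exact div_le_of_le_mul₀ (norm_nonneg _) (norm_nonneg _) (abs_real_inner_le_norm _ _)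

lemma integral_integral_abs_inner_div_norm_stdGaussian [Nontrivial E] :
    ∫ w, ∫ x, |⟪w, x⟫| / ‖x‖ ∂stdGaussian E ∂stdGaussian E = √(2 / π) := by
  calc ∫ w, ∫ x, |⟪w, x⟫| / ‖x‖ ∂stdGaussian E ∂stdGaussian E
      = ∫ x, (∫ w, |⟪x, w⟫| ∂stdGaussian E) / ‖x‖ ∂stdGaussian E := by
        rw [integral_integral_swap integrable_abs_inner_div_norm_stdGaussian_prod]
        simp_rw [integral_div, real_inner_comm]
    _ = ∫ _ : E, √(2 / π) ∂stdGaussian E := by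
        refine integral_congr_ae ?_
        filter_upwards [Measure.ae_ne (stdGaussian E) 0] with x hx
        rw [integral_abs_inner_stdGaussian, mul_div_cancel_left₀ _ (norm_ne_zero_iff.2 hx)]
    _ = √(2 / π) := by simp

lemma integral_abs_inner_div_norm_stdGaussian [Nontrivial E] (v : E) :
    ∫ x, |⟪v, x⟫| / ‖x‖ ∂stdGaussian E = _root_.beta (finrank ℝ E) * ‖v‖ := by
  have h_dim : (0 : ℝ) < finrank ℝ E := by exact_mod_cast finrank_pos
  have h_average : (∫ w : E, ‖w‖ ∂stdGaussian E) * ∫ x, |⟪v, x⟫| / ‖x‖ ∂stdGaussian E =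
      ‖v‖ * √(2 / π) := by
    simp_rw [← integral_mul_const, norm_mul_integral_abs_inner_div_norm_stdGaussian_comm v,
      integral_const_mul, integral_integral_abs_inner_div_norm_stdGaussian]
  have h_Gamma : 0 < Gamma (finrank ℝ E / 2 : ℝ) := Gamma_pos_of_pos (by positivity)
  have h_Gamma' : 0 < Gamma ((finrank ℝ E + 1) / 2 : ℝ) := Gamma_pos_of_pos (by positivity)
  rw [integral_norm_stdGaussian, sqrt_div zero_le_two] at h_average
  rw [_root_.beta]
  field_simp at h_average ⊢
  linear_combination h_average

end Gaussian

section Frobenius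

variable {ι κ τ : Type*} [Fintype ι] [Fintype κ] [Fintype τ]

/-- The entries of a matrix as a vector of Euclidean space, which turns `frobInner` and the
Frobenius norm into the Euclidean inner product and norm. As `Matrix.vec` stacks columns, it is
applied to the transpose so that entries are indexed by (row, column). -/
def entryVec (X : Matrix ι κ ℝ) : EuclideanSpace ℝ (ι × κ) :=
  WithLp.toLp 2 (vec Xᵀ)

lemma frobInner_eq_inner (X Y : Matrix ι κ ℝ) : frobInner X Y = ⟪entryVec X, entryVec Y⟫ := by
  rw [entryVec, entryVec, EuclideanSpace.inner_toLp_toLp, star_trivial, vec_dotProduct_vec,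
    transpose_transpose, trace_mul_comm, frobInner]

lemma norm_entryVec (X : Matrix ι κ ℝ) : ‖entryVec X‖ = ‖X‖ := by
  simp [entryVec, EuclideanSpace.norm_eq, frobenius_norm_def, sqrt_eq_rpow, Fintype.sum_prod_type]

lemma frobInner_self (X : Matrix ι κ ℝ) : frobInner X X = ‖X‖ ^ 2 := by
  rw [frobInner_eq_inner, real_inner_self_eq_norm_sq, norm_entryVec]

lemma frobInner_comm (X Y : Matrix ι κ ℝ) : frobInner X Y = frobInner Y X := by
  simp only [frobInner_eq_inner, real_inner_comm]

lemma frobInner_smul_left (c : ℝ) (X Y : Matrix ι κ ℝ) :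
    frobInner (c • X) Y = c * frobInner X Y := by
  simp only [frobInner, transpose_smul, smul_mul, trace_smul, smul_eq_mul]

lemma frobInner_mul_transpose_right (G : Matrix ι τ ℝ) (R : Matrix ι κ ℝ) (A : Matrix τ κ ℝ) :
    frobInner G (R * Aᵀ) = frobInner (G * A) R := by
  rw [frobInner, frobInner, ← Matrix.mul_assoc, trace_mul_comm, ← Matrix.mul_assoc, transpose_mul]

lemma norm_mul_transpose_of_transpose_mul_self_eq_one [DecidableEq κ] (R : Matrix ι κ ℝ)
    {A : Matrix τ κ ℝ} (hA : Aᵀ * A = 1) : ‖R * Aᵀ‖ = ‖R‖ := by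
  rw [← sq_eq_sq₀ (norm_nonneg _) (norm_nonneg _), ← frobInner_self, ← frobInner_self,
    frobInner_mul_transpose_right, Matrix.mul_assoc, hA, Matrix.mul_one]

lemma frobInner_frobInner_smul_div_norm (X Y : Matrix ι κ ℝ) :
    frobInner (frobInner Y X • X) Y / (‖frobInner Y X • X‖ * ‖Y‖) =
      |frobInner X Y| / (‖X‖ * ‖Y‖) := by
  rw [frobInner_smul_left, frobInner_comm Y X, norm_smul, norm_eq_abs, ← abs_mul_abs_self,
    mul_assoc]
  rcases eq_or_ne (frobInner X Y) 0 with h_zero | h_ne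
  · simp [h_zero]
  · rw [mul_div_mul_left _ _ (abs_ne_zero.2 h_ne)]

end Frobenius

lemma measurable_entryVec_of {m r : ℕ} :
    Measurable fun ω : Fin m → Fin r → ℝ ↦ entryVec (of ω) := by
  change Measurable fun ω : Fin m → Fin r → ℝ ↦
    WithLp.toLp 2 fun p : Fin m × Fin r ↦ ω p.1 p.2
  fun_prop

lemma gaussMat_map_entryVec (m r : ℕ) :
    (gaussMat m r).map (fun ω ↦ entryVec (of ω)) =
      stdGaussian (EuclideanSpace ℝ (Fin m × Fin r)) := by
  have h_uncurry := Measure.infinitePi_map_curry_symm (ι := Fin m) (κ := Fin r) (X := ℝ)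
    fun _ _ ↦ gaussianReal 0 1
  simp only [Measure.infinitePi_eq_pi] at h_uncurry
  rw [← map_pi_eq_stdGaussian, ← h_uncurry, Measure.map_map (by fun_prop) (by fun_prop)]
  rfl

lemma integral_abs_frobInner_div_norm_gaussMat {m r : ℕ} (hm : 0 < m) (hr : 0 < r)
    (X : Matrix (Fin m) (Fin r) ℝ) :
    ∫ ω, |frobInner (of ω) X| / ‖of ω‖ ∂gaussMat m r = _root_.beta (m * r) * ‖X‖ := by
  have : Nonempty (Fin m × Fin r) := ⟨(⟨0, hm⟩, ⟨0, hr⟩)⟩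
  have h_meas : Measurable fun x ↦ |⟪entryVec X, x⟫| / ‖x‖ := by fun_prop
  calc ∫ ω, |frobInner (of ω) X| / ‖of ω‖ ∂gaussMat m r
      = ∫ ω, |⟪entryVec X, entryVec (of ω)⟫| / ‖entryVec (of ω)‖ ∂gaussMat m r := by
        simp only [frobInner_comm _ X, frobInner_eq_inner, norm_entryVec]
    _ = ∫ x, |⟪entryVec X, x⟫| / ‖x‖ ∂stdGaussian (EuclideanSpace ℝ (Fin m × Fin r)) := by
        rw [← gaussMat_map_entryVec, integral_map measurable_entryVec_of.aemeasurable
          h_meas.aestronglyMeasurable]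
    _ = _root_.beta (m * r) * ‖X‖ := by
        rw [integral_abs_inner_div_norm_stdGaussian, norm_entryVec, finrank_euclideanSpace,
          Fintype.card_prod, Fintype.card_fin, Fintype.card_fin]

/-- expected cosine similarity of the noiseless AGZO estimator.
`E_R[|⟨R, GA⟩_F|/(‖R‖_F‖G‖_F)] = β_{mr}·‖GA‖_F/‖G‖_F`, and consequently the expected
cosine similarity between `Ĝ = ⟨G,RAᵀ⟩_F·RAᵀ` and `G` equals `β_{mr}·‖GA‖_F/‖G‖_F`. -/
theorem agzo_expected_cosine (m n r : ℕ) (hm : 0 < m) (hn : 0 < n) (hr : 0 < r)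
    (G : Matrix (Fin m) (Fin n) ℝ) (hG : G ≠ 0)
    (A : Matrix (Fin n) (Fin r) ℝ) (hA : Aᵀ * A = 1) :
    (∫ ω, |frobInner (Matrix.of ω) (G * A)| / (‖Matrix.of (m := Fin m) (n := Fin r) ω‖ * ‖G‖)
        ∂(gaussMat m r))
      = _root_.beta (m * r) * ‖G * A‖ / ‖G‖ ∧
    (∫ ω, frobInner (frobInner G (Matrix.of ω * Aᵀ) • (Matrix.of ω * Aᵀ)) G
          / (‖frobInner G (Matrix.of ω * Aᵀ) • (Matrix.of ω * Aᵀ)‖ * ‖G‖)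
        ∂(gaussMat m r))
      = _root_.beta (m * r) * ‖G * A‖ / ‖G‖ := by
  have h_cosine : ∫ ω, |frobInner (of ω) (G * A)| / (‖of (m := Fin m) (n := Fin r) ω‖ * ‖G‖)
      ∂gaussMat m r = _root_.beta (m * r) * ‖G * A‖ / ‖G‖ := by
    simp_rw [← div_div, integral_div]
    rw [integral_abs_frobInner_div_norm_gaussMat hm hr]
  have h_estimator (R : Matrix (Fin m) (Fin r) ℝ) :
      frobInner (frobInner G (R * Aᵀ) • (R * Aᵀ)) G / (‖frobInner G (R * Aᵀ) • (R * Aᵀ)‖ * ‖G‖) =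
        |frobInner R (G * A)| / (‖R‖ * ‖G‖) := by
    rw [frobInner_frobInner_smul_div_norm, frobInner_comm, frobInner_mul_transpose_right,
      frobInner_comm, norm_mul_transpose_of_transpose_mul_self_eq_one R hA]
  exact ⟨h_cosine, by simp_rw [h_estimator, h_cosine]⟩

end
end
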